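/- arXiv:2308.12702 — 2 statements merged into one kernel-verified Lean document; each statement's English description precedes it below -/
import Mathlib

section
/- For every integer n ≥ 4 and every continuous map f : S^{n-1} → ℝ^{⌊n/2⌋ - 2}, there exist pairwise orthogonal vectors v_1, v_2, v_3, v_4 ∈ S^{n-1} such that f(v_1) = f(v_2) and f(v_3) = f(v_4). -/
open scoped RealInnerProductSpace

/-!
Place one subspace of dimension `m + 2` for each pair, mutually orthogonal, in the given space. In
such a subspace fix a unit vector `e` and let `y` run over the unit sphere of its orthogonal
complement, which has dimension `m + 1`: the odd map `y ↦ f ((e + y) / √2) - f ((e - y) / √2)` to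
an `m`-dimensional space vanishes somewhere by the Borsuk–Ulam theorem, and `(e ± y) / √2` are
orthonormal.

Borsuk–Ulam is proved algebraically. By Stone–Weierstrass and compactness it suffices that `m` real
forms `F i` of the same odd degree `d` in `m + 1` variables have a common zero on the sphere, and
again by compactness that they can be made arbitrarily small simultaneously. For all but countably
many `s`, the ring `ℝ[X]` is free of rank `d ^ (m + 1)` over the subring generated by the forms
`h i = X i ^ d + s * F i` (with `F i = 0` for the extra variable). The fibres of `h` are then the
spectra of real algebras of odd dimension, which have a residue field of odd degree over `ℝ`, that
is, a real point. A real point of the fibre where only the extra form is nonzero, rescaled to the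
sphere, satisfies `X i ^ d = -s * F i`, so `|F i| ≤ 1 / s` there.
-/

section OddAlgebra

open Module TensorProduct

theorem nonempty_algHom_real_or_finrank_quotient_eq_two {A : Type*} [CommRing A] [Algebra ℝ A]
    (I : Ideal A) [I.IsMaximal] [Module.Finite ℝ (A ⧸ I)] :
    Nonempty (A →ₐ[ℝ] ℝ) ∨ finrank ℝ (A ⧸ I) = 2 := by
  let _ := Ideal.Quotient.field I
  rcases Real.nonempty_algEquiv_or (A ⧸ I) with ⟨⟨toReal⟩⟩ | ⟨⟨toComplex⟩⟩
  · exact .inl ⟨toReal.toAlgHom.comp (Ideal.Quotient.mkₐ ℝ I)⟩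
  · exact .inr (toComplex.toLinearEquiv.finrank_eq.trans Complex.finrank_real_complex)

theorem nonempty_algHom_real_of_odd_finrank {A : Type*} [CommRing A] [Algebra ℝ A]
    (M : Type*) [AddCommGroup M] [Module A M] [Module ℝ M] [IsScalarTower ℝ A M]
    [Module.Finite ℝ M] (hM : Odd (finrank ℝ M)) : Nonempty (A →ₐ[ℝ] ℝ) := by
  induction hn : finrank ℝ M using Nat.strong_induction_on generalizing M with
  | _ n ih =>
    have : Nontrivial M := nontrivial_of_finrank_pos hM.pos
    have : Module.Finite A M := .of_restrictScalars_finite ℝ A M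
    obtain ⟨N, hN⟩ := IsCoatomic.exists_coatom (α := Submodule A M)
    obtain ⟨I, hI, ⟨e⟩⟩ :=
      isSimpleModule_iff_quot_maximal.mp (isSimpleModule_iff_isCoatom.mpr hN)
    have : Module.Finite ℝ (M ⧸ N) :=
      inferInstanceAs (Module.Finite ℝ (M ⧸ N.restrictScalars ℝ))
    have : Module.Finite ℝ N := inferInstanceAs (Module.Finite ℝ (N.restrictScalars ℝ))
    have : Module.Finite ℝ (A ⧸ I) := .equiv (e.restrictScalars ℝ)
    refine (nonempty_algHom_real_or_finrank_quotient_eq_two I).elim id fun hI₂ => ?_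
    have hadd : finrank ℝ (M ⧸ N) + finrank ℝ N = finrank ℝ M :=
      (N.restrictScalars ℝ).finrank_quotient_add_finrank
    rw [(e.restrictScalars ℝ).finrank_eq, hI₂] at hadd
    exact ih (finrank ℝ N) (by omega) N (by grind) rfl

variable {A B : Type*} [CommRing A] [Algebra ℝ A] [CommRing B] [Algebra ℝ B]

theorem exists_algHom_real_extending_of_odd_finrank [Algebra B A] [IsScalarTower ℝ B A]
    [Module.Free B A] [Module.Finite B A] (hA : Odd (finrank B A)) (χ : B →ₐ[ℝ] ℝ) :
    ∃ ψ : A →ₐ[ℝ] ℝ, ∀ b, ψ (algebraMap B A b) = χ b := by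
  let _ : Algebra B ℝ := χ.toRingHom.toAlgebra
  have : Nontrivial B := χ.toRingHom.domain_nontrivial
  have hfiber : Odd (finrank ℝ (ℝ ⊗[B] A)) := by rwa [finrank_baseChange]
  obtain ⟨ω⟩ := nonempty_algHom_real_of_odd_finrank (A := ℝ ⊗[B] A) _ hfiber
  let ψ : A →+* ℝ :=
    ω.toRingHom.comp (Algebra.TensorProduct.includeRight : A →ₐ[B] ℝ ⊗[B] A).toRingHom
  have hψ (b : B) : ψ (algebraMap B A b) = χ b := by
    have : (1 : ℝ) ⊗ₜ[B] algebraMap B A b = algebraMap ℝ (ℝ ⊗[B] A) (χ b) := by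
      rw [Algebra.algebraMap_eq_smul_one, ← TensorProduct.smul_tmul,
        Algebra.TensorProduct.algebraMap_apply, Algebra.smul_def, mul_one]
      rfl
    exact (congrArg ω this).trans (ω.commutes _)
  refine ⟨{ ψ with commutes' := fun r => ?_ }, hψ⟩
  exact (congrArg ψ (IsScalarTower.algebraMap_apply ℝ B A r)).trans <|
    (hψ _).trans (χ.commutes r)

theorem exists_algHom_real_comp_eq_of_bijective_sum {κ : Type*} [Fintype κ] (φ : B →ₐ[ℝ] A)
    (v : κ → A) (hv : Function.Bijective fun c : κ → B => ∑ k, φ (c k) * v k)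
    (hκ : Odd (Fintype.card κ)) (χ : B →ₐ[ℝ] ℝ) : ∃ ψ : A →ₐ[ℝ] ℝ, ψ.comp φ = χ := by
  let _ : Algebra B A := φ.toRingHom.toAlgebra
  have : IsScalarTower ℝ B A := .of_algebraMap_eq fun r => (φ.commutes r).symm
  have : Nontrivial B := χ.toRingHom.domain_nontrivial
  let b : Basis κ B A :=
    .ofEquivFun (LinearEquiv.ofBijective (Fintype.linearCombination B v) hv).symm
  have := Module.Free.of_basis b
  have := Module.Finite.of_basis b
  obtain ⟨ψ, hψ⟩ := exists_algHom_real_extending_of_odd_finrank (A := A)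
    (by rwa [finrank_eq_card_basis b]) χ
  exact ⟨ψ, AlgHom.ext hψ⟩

end OddAlgebra

section TwistedMonomials

open MvPolynomial Module

variable {σ : Type*} [Fintype σ] {R : Type*} [CommRing R]

/-- The monomial `X ^ a` with `X i ^ d` replaced by `h i` as often as possible. When these
products form an `R`-basis of `R[X]`, the ring `R[X]` is free over `R[h]` with basis the monomials
whose exponents are all less than `d`. -/
noncomputable def twistedMonomial (h : σ → MvPolynomial σ R) (d : ℕ) (a : σ →₀ ℕ) :
    MvPolynomial σ R :=
  ∏ i, h i ^ (a i / d) * X i ^ (a i % d)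

theorem map_twistedMonomial {S : Type*} [CommRing S] (φ : R →+* S) (h : σ → MvPolynomial σ R)
    (d : ℕ) (a : σ →₀ ℕ) :
    map φ (twistedMonomial h d a) = twistedMonomial (fun i => map φ (h i)) d a := by
  simp [twistedMonomial]

theorem isHomogeneous_twistedMonomial {h : σ → MvPolynomial σ R} {d : ℕ}
    (hh : ∀ i, (h i).IsHomogeneous d) (a : σ →₀ ℕ) :
    (twistedMonomial h d a).IsHomogeneous a.degree := by
  rw [Finsupp.degree_eq_sum]
  refine IsHomogeneous.prod _ _ _ fun i _ => ?_
  simpa only [Nat.div_add_mod] using ((hh i).pow (a i / d)).mul (isHomogeneous_X_pow i (a i % d))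

theorem twistedMonomial_X_pow (d : ℕ) (a : σ →₀ ℕ) :
    twistedMonomial (fun i => (X i : MvPolynomial σ R) ^ d) d a = monomial a 1 := by
  rw [monomial_eq, C_1, one_mul, Finsupp.prod_fintype _ _ fun i => pow_zero _]
  simp only [twistedMonomial, ← pow_mul, ← pow_add, Nat.div_add_mod]

/-- Division with remainder by `d` in each exponent, remainders first: it matches the twisted
monomials with the products of a monomial in `h` and a monomial with exponents below `d`. -/
noncomputable def exponentDivModEquiv (σ : Type*) [Finite σ] (d : ℕ) [NeZero d] :
    (σ →₀ ℕ) ≃ (_ : σ → Fin d) × (σ →₀ ℕ) :=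
  calc (σ →₀ ℕ)
    _ ≃ (σ → ℕ) := Finsupp.equivFunOnFinite
    _ ≃ (σ → ℕ × Fin d) := .piCongrRight fun _ => Nat.divModEquiv d
    _ ≃ (σ → ℕ) × (σ → Fin d) := .arrowProdEquivProdArrow _ _ _
    _ ≃ (σ → Fin d) × (σ → ℕ) := .prodComm _ _
    _ ≃ (σ → Fin d) × (σ →₀ ℕ) := .prodCongrRight fun _ => Finsupp.equivFunOnFinite.symm
    _ ≃ (_ : σ → Fin d) × (σ →₀ ℕ) := (Equiv.sigmaEquivProd _ _).symm

theorem twistedMonomial_eq_aeval_mul_prod (h : σ → MvPolynomial σ R) (d : ℕ) [NeZero d]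
    (a : σ →₀ ℕ) :
    twistedMonomial h d a = aeval h (monomial (exponentDivModEquiv σ d a).2 (1 : R)) *
      ∏ i, X i ^ ((exponentDivModEquiv σ d a).1 i : ℕ) := by
  rw [aeval_monomial, Finsupp.prod_fintype _ _ fun i => pow_zero _]
  simp [twistedMonomial, Finset.prod_mul_distrib, exponentDivModEquiv, Trans.trans]

theorem bijective_sum_aeval_mul_prod_of_basis [DecidableEq σ] {h : σ → MvPolynomial σ R}
    {d : ℕ} [NeZero d] (b : Basis (σ →₀ ℕ) R (MvPolynomial σ R))
    (hb : ∀ a, b a = twistedMonomial h d a) :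
    Function.Bijective fun c : (σ → Fin d) → MvPolynomial σ R =>
      ∑ r, aeval h (c r) * ∏ i, X i ^ (r i : ℕ) := by
  let Θ : ((σ → Fin d) → MvPolynomial σ R) →ₗ[R] MvPolynomial σ R :=
    ∑ r, LinearMap.mulRight R (∏ i, X i ^ (r i : ℕ)) ∘ₗ (aeval h).toLinearMap ∘ₗ LinearMap.proj r
  let e := (Pi.basis fun _ : σ → Fin d => basisMonomials σ R).equiv b (exponentDivModEquiv σ d).symm
  have hΘ : Θ = e.toLinearMap := by
    refine (Pi.basis fun _ : σ → Fin d => basisMonomials σ R).ext fun k => ?_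
    rw [LinearEquiv.coe_coe, Basis.equiv_apply, hb, twistedMonomial_eq_aeval_mul_prod,
      Equiv.apply_symm_apply, Pi.basis_apply, LinearMap.sum_apply,
      Finset.sum_eq_single_of_mem k.1 (Finset.mem_univ _)]
    · simp
    · intro r _ hr
      simp [hr]
  convert! e.bijective using 1
  funext c
  simpa [Θ] using LinearMap.congr_fun hΘ c

noncomputable instance fintypeDegreeEq (N : ℕ) : Fintype {a : σ →₀ ℕ // a.degree = N} :=
  (Finsupp.finite_of_degree_eq N).fintype

variable (σ R) in
/-- The monomials of degree `N` as a basis of the homogeneous polynomials of degree `N`. -/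
noncomputable def homogeneousMonomialBasis (N : ℕ) :
    Basis {a : σ →₀ ℕ // a.degree = N} R (homogeneousSubmodule σ R N) :=
  (basisRestrictSupport R {a : σ →₀ ℕ | a.degree = N}).map
    (LinearEquiv.ofEq _ _ (homogeneousSubmodule_eq_finsupp_supported σ R N).symm)

open scoped Classical in
/-- The determinant of the degree `N` twisted monomials with respect to the ordinary ones. For `h`
homogeneous of degree `d` it detects whether the former are a basis of the forms of degree `N`. -/
noncomputable def twistedDet (h : σ → MvPolynomial σ R) (d N : ℕ) : R :=
  Matrix.det (Matrix.of fun a b : {a : σ →₀ ℕ // a.degree = N} =>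
    coeff a.1 (twistedMonomial h d b.1))

theorem exists_basis_eq_twistedMonomial {h : σ → MvPolynomial σ R} {d : ℕ}
    (hh : ∀ i, (h i).IsHomogeneous d) (hdet : ∀ N, IsUnit (twistedDet h d N)) :
    ∃ b : Basis (σ →₀ ℕ) R (MvPolynomial σ R), ∀ a, b a = twistedMonomial h d a := by
  classical
  let v (N : ℕ) (a : {a : σ →₀ ℕ // a.degree = N}) : homogeneousSubmodule σ R N :=
    ⟨twistedMonomial h d a.1, by simpa [a.2] using isHomogeneous_twistedMonomial hh a.1⟩
  have hv (N : ℕ) : IsUnit ((homogeneousMonomialBasis σ R N).det (v N)) := hdet N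
  let w (N : ℕ) := Basis.mk ((Basis.is_basis_iff_det _).mpr (hv N)).1
    ((Basis.is_basis_iff_det _).mpr (hv N)).2.ge
  let _ := MvPolynomial.decomposition (σ := σ) (R := R)
  let b := (DirectSum.Decomposition.isInternal (homogeneousSubmodule σ R)).collectedBasis w
  exact ⟨b.reindex (Equiv.sigmaFiberEquiv Finsupp.degree), fun a => by simp [b, w, v]⟩

theorem map_twistedDet {S : Type*} [CommRing S] (φ : R →+* S) (h : σ → MvPolynomial σ R)
    (d N : ℕ) : φ (twistedDet h d N) = twistedDet (fun i => map φ (h i)) d N := by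
  simp only [twistedDet, RingHom.map_det]
  congr 1
  ext a b
  simp [← map_twistedMonomial, coeff_map]

theorem twistedDet_X_pow (d N : ℕ) :
    twistedDet (fun i => (X i : MvPolynomial σ R) ^ d) d N = 1 := by
  classical
  simp_rw [twistedDet, twistedMonomial_X_pow]
  rw [← Matrix.det_one (n := {a : σ →₀ ℕ // a.degree = N})]
  congr 1
  ext a b
  simp [coeff_monomial, Matrix.one_apply, Subtype.ext_iff, eq_comm]

/-- The determinants are polynomials in the parameter, equal to `1` at `0`. -/
theorem countable_setOf_exists_twistedDet_eq_zero [IsDomain R] (f : σ → MvPolynomial σ R) (d : ℕ) :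
    {s : R | ∃ N, twistedDet (fun i => X i ^ d + C s * f i) d N = 0}.Countable := by
  let H (i : σ) : MvPolynomial σ (Polynomial R) :=
    X i ^ d + C Polynomial.X * map Polynomial.C (f i)
  have heval (s : R) (N : ℕ) :
      (twistedDet H d N).eval s = twistedDet (fun i => X i ^ d + C s * f i) d N := by
    have hC : (Polynomial.evalRingHom s).comp Polynomial.C = RingHom.id R := by ext; simp
    rw [← Polynomial.coe_evalRingHom, map_twistedDet]
    simp [H, map_map, hC, map_id]
  have hne (N : ℕ) : twistedDet H d N ≠ 0 := fun h0 => by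
    simpa [h0, twistedDet_X_pow] using heval 0 N
  rw [Set.ofPred_exists]
  refine Set.countable_iUnion fun N => ?_
  simp only [← heval]
  exact (Polynomial.finite_setOfPred_isRoot (hne N)).countable

end TwistedMonomials

section OddForms

open MvPolynomial Metric

theorem eval_smul_of_isHomogeneous {σ R : Type*} [CommSemiring R] {d : ℕ}
    {F : MvPolynomial σ R} (hF : F.IsHomogeneous d) (c : R) (y : σ → R) :
    eval (c • y) F = c ^ d * eval y F := by
  rw [eval_eq, eval_eq, Finset.mul_sum]
  refine Finset.sum_congr rfl fun a ha => ?_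
  have hdeg : ∑ i ∈ a.support, a i = d := (hF.degree_eq_sum_deg_support ha).symm
  simp only [Pi.smul_apply, smul_eq_mul, mul_pow, Finset.prod_mul_distrib,
    Finset.prod_pow_eq_pow_sum, hdeg]
  ring

theorem exists_forall_eval_eq {σ : Type*} [Fintype σ] {d : ℕ} (hd : Odd d)
    {h : σ → MvPolynomial σ ℝ} (hh : ∀ i, (h i).IsHomogeneous d)
    (hdet : ∀ N, twistedDet h d N ≠ 0) (t : σ → ℝ) : ∃ x : σ → ℝ, ∀ i, eval x (h i) = t i := by
  classical
  have : NeZero d := ⟨hd.pos.ne'⟩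
  obtain ⟨b, hb⟩ := exists_basis_eq_twistedMonomial hh fun N => (hdet N).isUnit
  obtain ⟨ψ, hψ⟩ := exists_algHom_real_comp_eq_of_bijective_sum (aeval h) _
    (bijective_sum_aeval_mul_prod_of_basis b hb) (by simpa using hd.pow) (aeval t)
  have hψ_eval : ψ = aeval fun i => ψ (X i) := algHom_ext fun i => by simp
  refine ⟨fun i => ψ (X i), fun i => ?_⟩
  rw [← coe_aeval_eq_eval, RingHom.coe_coe, ← hψ_eval]
  simpa using AlgHom.congr_fun hψ (X i)

variable {ι : Type*} [Fintype ι]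

theorem exists_mem_sphere_forall_eval_some_eq_zero {d : ℕ} (hd : Odd d)
    {h : Option ι → MvPolynomial (Option ι) ℝ} (hh : ∀ i, (h i).IsHomogeneous d)
    (hdet : ∀ N, twistedDet h d N ≠ 0) :
    ∃ y : sphere (0 : EuclideanSpace ℝ (Option ι)) 1, ∀ i, eval y.1.ofLp (h (some i)) = 0 := by
  obtain ⟨x, hx⟩ := exists_forall_eval_eq hd hh hdet fun i => i.elim 1 fun _ => 0
  have hx_ne : WithLp.toLp 2 x ≠ 0 := by
    intro hx₀
    have hx_zero : x = (0 : ℝ) • x := by simpa using hx₀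
    have hx_none := hx none
    rw [hx_zero, eval_smul_of_isHomogeneous (hh none), zero_pow hd.pos.ne'] at hx_none
    simp at hx_none
  refine ⟨⟨‖WithLp.toLp 2 x‖⁻¹ • WithLp.toLp 2 x, ?_⟩, fun i => ?_⟩
  · simpa using norm_smul_inv_norm (𝕜 := ℝ) hx_ne
  · simp [eval_smul_of_isHomogeneous (hh _), hx]

theorem exists_eq_zero_of_forall_exists_norm_lt {X E : Type*} [TopologicalSpace X]
    [CompactSpace X] [NormedAddCommGroup E] {g : X → E} (hg : Continuous g)
    (h : ∀ ε > 0, ∃ x, ‖g x‖ < ε) : ∃ x, g x = 0 := by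
  have hmem : (0 : E) ∈ closure (Set.range g) := by
    simpa [Metric.mem_closure_range_iff] using h
  rwa [(isCompact_range hg).isClosed.closure_eq] at hmem

theorem exists_mem_sphere_forall_abs_eval_lt {d : ℕ} (hd : Odd d)
    {F : ι → MvPolynomial (Option ι) ℝ} (hF : ∀ i, (F i).IsHomogeneous d) {ε : ℝ} (hε : 0 < ε) :
    ∃ y : sphere (0 : EuclideanSpace ℝ (Option ι)) 1, ∀ i, |eval y.1.ofLp (F i)| < ε := by
  let G (i : Option ι) : MvPolynomial (Option ι) ℝ := i.elim 0 F
  have hG (i : Option ι) : (G i).IsHomogeneous d := by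
    cases i with
    | none => exact isHomogeneous_zero _ _ _
    | some i => exact hF i
  obtain ⟨s, hs, hεs⟩ :=
    ((countable_setOf_exists_twistedDet_eq_zero G d).dense_compl ℝ).exists_gt ε⁻¹
  have hs_pos : 0 < s := (inv_pos.mpr hε).trans hεs
  obtain ⟨y, hy⟩ := exists_mem_sphere_forall_eval_some_eq_zero hd
    (fun i => (isHomogeneous_X_pow i d).add (by simpa using (isHomogeneous_C _ s).mul (hG i)))
    (fun N hN => hs ⟨N, hN⟩)
  refine ⟨y, fun i => ?_⟩
  have hy_le : |y.1 (some i)| ≤ 1 := by simpa using PiLp.norm_apply_le y.1 (some i)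
  have hyi : y.1 (some i) ^ d + s * eval y.1.ofLp (F i) = 0 := by simpa [G] using hy i
  have hsF : s * |eval y.1.ofLp (F i)| ≤ 1 := by
    calc s * |eval y.1.ofLp (F i)|
      _ = |y.1 (some i)| ^ d := by
        rw [← abs_pow, eq_neg_of_add_eq_zero_left hyi, abs_neg, abs_mul, abs_of_pos hs_pos]
      _ ≤ 1 := pow_le_one₀ (abs_nonneg _) hy_le
  calc |eval y.1.ofLp (F i)|
    _ ≤ s⁻¹ := by rwa [← one_div, le_div_iff₀' hs_pos]
    _ < ε := inv_lt_of_inv_lt₀ hε hεs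

theorem exists_mem_sphere_forall_eval_eq_zero {d : ℕ} (hd : Odd d)
    {F : ι → MvPolynomial (Option ι) ℝ} (hF : ∀ i, (F i).IsHomogeneous d) :
    ∃ y : sphere (0 : EuclideanSpace ℝ (Option ι)) 1, ∀ i, eval y.1.ofLp (F i) = 0 := by
  have hcont : Continuous fun (y : sphere (0 : EuclideanSpace ℝ (Option ι)) 1) i =>
      eval y.1.ofLp (F i) :=
    continuous_pi fun i => (continuous_eval (F i)).comp (by fun_prop)
  obtain ⟨y, hy⟩ := exists_eq_zero_of_forall_exists_norm_lt hcont fun ε hε =>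
    (exists_mem_sphere_forall_abs_eval_lt hd hF hε).imp fun y hy => (pi_norm_lt_iff hε).mpr hy
  exact ⟨y, congrFun hy⟩

end OddForms

section SphereIsometries

open Module Metric

theorem exists_orthogonalFamily_of_sum_finrank_le {E ι : Type*} [NormedAddCommGroup E]
    [InnerProductSpace ℝ E] [FiniteDimensional ℝ E] [Fintype ι] {G : ι → Type*}
    [∀ i, NormedAddCommGroup (G i)] [∀ i, InnerProductSpace ℝ (G i)]
    [∀ i, FiniteDimensional ℝ (G i)] (h : ∑ i, finrank ℝ (G i) ≤ finrank ℝ E) :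
    ∃ V : ∀ i, G i →ₗᵢ[ℝ] E, OrthogonalFamily ℝ G V := by
  let b (i : ι) := stdOrthonormalBasis ℝ (G i)
  obtain ⟨emb⟩ : Nonempty ((i : ι) × Fin (finrank ℝ (G i)) ↪ Fin (finrank ℝ E)) :=
    Function.Embedding.nonempty_of_card_le (by simpa using h)
  let u := stdOrthonormalBasis ℝ E ∘ emb
  have hu : Orthonormal ℝ u := (stdOrthonormalBasis ℝ E).orthonormal.comp emb emb.injective
  let L (i : ι) : G i →ₗ[ℝ] E := (b i).toBasis.constr ℝ fun k => u ⟨i, k⟩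
  have hL (i : ι) (x : G i) : L i x = ∑ k, (b i).repr x k • u ⟨i, k⟩ := by
    simp [L, Basis.constr_apply_fintype]
  have hLb (i : ι) : L i ∘ (b i).toBasis = u ∘ Sigma.mk i :=
    funext fun k => (b i).toBasis.constr_basis ℝ _ k
  have horth {i j : ι} (hij : i ≠ j) (x : G i) (y : G j) : ⟪L i x, L j y⟫ = 0 := by
    have hu_orth (k : Fin (finrank ℝ (G i))) (l : Fin (finrank ℝ (G j))) :
        ⟪u ⟨i, k⟩, u ⟨j, l⟩⟫ = 0 := hu.2 (by simp [hij])
    simp only [hL, sum_inner, inner_sum, real_inner_smul_left, real_inner_smul_right, hu_orth,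
      mul_zero, Finset.sum_const_zero]
  refine ⟨fun i => (L i).isometryOfOrthonormal (v := (b i).toBasis) (by simp) ?_,
    fun _ _ hij => horth hij⟩
  rw [hLb]
  exact hu.comp _ sigma_mk_injective

variable {G E : Type*} [NormedAddCommGroup G] [NormedSpace ℝ G] [NormedAddCommGroup E]
  [NormedSpace ℝ E]

/-- The map between unit spheres induced by a linear isometry, used to pull functions on a
sphere back to spheres of subspaces. -/
def sphereMap (L : G →ₗᵢ[ℝ] E) (y : sphere (0 : G) 1) : sphere (0 : E) 1 :=
  ⟨L y, by simp⟩

theorem continuous_sphereMap (L : G →ₗᵢ[ℝ] E) : Continuous (sphereMap L) :=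
  (L.continuous.comp continuous_subtype_val).subtype_mk _

theorem odd_sphereMap (L : G →ₗᵢ[ℝ] E) : Function.Odd (sphereMap L) :=
  fun y => Subtype.ext (L.map_neg y)

end SphereIsometries

section BorsukUlam

open Module MvPolynomial Metric

theorem exists_forall_abs_eval_sub_lt {Y σ : Type*} [TopologicalSpace Y] [CompactSpace Y]
    {c : Y → σ → ℝ} (hc : Continuous c) (hc_inj : Function.Injective c) {φ : Y → ℝ}
    (hφ : Continuous φ) {ε : ℝ} (hε : 0 < ε) :
    ∃ p : MvPolynomial σ ℝ, ∀ x, |eval (c x) p - φ x| < ε := by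
  let coord (i : σ) : C(Y, ℝ) := ⟨fun x => c x i, (continuous_apply i).comp hc⟩
  have hsep : (aeval coord : MvPolynomial σ ℝ →ₐ[ℝ] C(Y, ℝ)).range.SeparatesPoints := by
    intro x y hxy
    obtain ⟨i, hi⟩ := Function.ne_iff.mp (hc_inj.ne hxy)
    exact ⟨coord i, ⟨coord i, ⟨X i, by simp⟩, rfl⟩, hi⟩
  obtain ⟨⟨_, p, rfl⟩, hp⟩ :=
    ContinuousMap.exists_mem_subalgebra_near_continuous_of_separatesPoints _ hsep φ hφ ε hε
  refine ⟨p, fun x => ?_⟩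
  have heval : aeval coord p x = eval (c x) p := by
    change ContinuousMap.evalAlgHom ℝ ℝ x (aeval coord p) = _
    rw [← AlgHom.comp_apply, comp_aeval]
    rfl
  simpa [heval] using hp x

/-- On the unit sphere, powers of `∑ i, X i ^ 2` raise the odd homogeneous components of `p` to
degree `d` without changing their values. -/
theorem exists_isHomogeneous_two_mul_eval_eq {σ R : Type*} [Fintype σ] [CommRing R]
    (p : MvPolynomial σ R) {d : ℕ} (hd : Odd d) (hpd : p.totalDegree ≤ d) :
    ∃ F : MvPolynomial σ R, F.IsHomogeneous d ∧
      ∀ y : σ → R, ∑ i, y i ^ 2 = 1 → 2 * eval y F = eval y p - eval (-y) p := by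
  refine ⟨∑ k ∈ Finset.range (p.totalDegree + 1) with Odd k,
    homogeneousComponent k p * (∑ i, X i ^ 2) ^ ((d - k) / 2), ?_, fun y hy => ?_⟩
  · refine IsHomogeneous.sum _ _ _ fun k hk => ?_
    simp only [Finset.mem_filter, Finset.mem_range] at hk
    have hdeg : k + 2 * ((d - k) / 2) = d := by grind
    have hsq : (∑ i : σ, (X i : MvPolynomial σ R) ^ 2).IsHomogeneous 2 :=
      IsHomogeneous.sum _ _ _ fun i _ => isHomogeneous_X_pow i 2
    simpa only [hdeg] using (homogeneousComponent_isHomogeneous k p).mul (hsq.pow ((d - k) / 2))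
  · have heval_neg (k : ℕ) : eval (-y) (homogeneousComponent k p) =
        (-1) ^ k * eval y (homogeneousComponent k p) := by
      simpa using eval_smul_of_isHomogeneous (homogeneousComponent_isHomogeneous k p) (-1) y
    have hsum (z : σ → R) : eval z p =
        ∑ k ∈ Finset.range (p.totalDegree + 1), eval z (homogeneousComponent k p) := by
      rw [← map_sum, sum_homogeneousComponent]
    rw [hsum y, hsum (-y), ← Finset.sum_sub_distrib, map_sum, Finset.mul_sum, Finset.sum_filter]
    refine Finset.sum_congr rfl fun k _ => ?_
    rcases k.even_or_odd with hk | hk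
    · simp [heval_neg, hk.neg_one_pow, Nat.not_odd_iff_even.mpr hk]
    · simp [heval_neg, hk.neg_one_pow, hk, hy, two_mul]

theorem exists_eq_zero_of_odd_sphere_euclideanSpace {ι : Type*} [Fintype ι]
    {g : sphere (0 : EuclideanSpace ℝ (Option ι)) 1 → ι → ℝ} (hg : Continuous g)
    (hodd : Function.Odd g) : ∃ y, g y = 0 := by
  refine exists_eq_zero_of_forall_exists_norm_lt hg fun ε hε => ?_
  have happrox (i : ι) : ∃ p : MvPolynomial (Option ι) ℝ, ∀ y, |eval y.1.ofLp p - g y i| < ε :=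
    exists_forall_abs_eval_sub_lt (by fun_prop)
      ((WithLp.ofLp_injective 2).comp Subtype.val_injective) (by fun_prop) hε
  choose p hp using happrox
  have hd : Odd (2 * ∑ i, (p i).totalDegree + 1) := odd_two_mul_add_one _
  have hpd (i : ι) : (p i).totalDegree ≤ 2 * ∑ i, (p i).totalDegree + 1 := by
    have := Finset.single_le_sum_of_canonicallyOrdered (f := fun i => (p i).totalDegree)
      (Finset.mem_univ i)
    lia
  choose F hF hFp using fun i => exists_isHomogeneous_two_mul_eval_eq (p i) hd (hpd i)
  obtain ⟨y, hy⟩ := exists_mem_sphere_forall_eval_eq_zero hd hF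
  refine ⟨y, (pi_norm_lt_iff hε).mpr fun i => ?_⟩
  have hy_sq : ∑ j, y.1 j ^ 2 = 1 := by
    rw [← EuclideanSpace.real_norm_sq_eq, norm_eq_of_mem_sphere, one_pow]
  have hp_even : eval y.1.ofLp (p i) = eval (-y.1.ofLp) (p i) := by
    have := hFp i _ hy_sq
    rw [hy, mul_zero] at this
    exact sub_eq_zero.mp this.symm
  have hp_neg : |eval (-y.1.ofLp) (p i) + g y i| < ε := by
    simpa [hodd y] using hp i (-y)
  rw [Real.norm_eq_abs, abs_lt]
  constructor <;> linarith [abs_lt.mp (hp i y), abs_lt.mp hp_neg]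

variable {E F : Type*} [NormedAddCommGroup E] [InnerProductSpace ℝ E]
  [NormedAddCommGroup F] [NormedSpace ℝ F] [FiniteDimensional ℝ F]

theorem exists_eq_zero_of_odd_sphere (h : finrank ℝ F < finrank ℝ E) {g : sphere (0 : E) 1 → F}
    (hg : Continuous g) (hodd : Function.Odd g) : ∃ y, g y = 0 := by
  have : FiniteDimensional ℝ E := .of_finrank_pos (by lia)
  obtain ⟨V, -⟩ := exists_orthogonalFamily_of_sum_finrank_le (E := E)
    (G := fun _ : Unit => EuclideanSpace ℝ (Option (Fin (finrank ℝ F)))) (by simpa using h)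
  let e : F ≃L[ℝ] (Fin (finrank ℝ F) → ℝ) := .ofFinrankEq (by simp)
  have hcont : Continuous fun y => e (g (sphereMap (V ()) y)) :=
    e.continuous.comp (hg.comp (continuous_sphereMap _))
  obtain ⟨y, hy⟩ := exists_eq_zero_of_odd_sphere_euclideanSpace hcont fun y => by
    rw [odd_sphereMap, hodd, map_neg]
  exact ⟨_, e.map_eq_zero_iff.mp hy⟩

end BorsukUlam

section OrthogonalPairs

open Module Metric

variable {E : Type*} [NormedAddCommGroup E] [InnerProductSpace ℝ E]

theorem norm_inv_sqrt_two_smul_add_eq_one {x y : E} (hx : ‖x‖ = 1) (hy : ‖y‖ = 1)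
    (hxy : ⟪x, y⟫ = 0) : ‖(√2)⁻¹ • (x + y)‖ = 1 := by
  have hsq : ‖x + y‖ ^ 2 = 2 := by
    rw [norm_add_sq_real, hx, hy, hxy]
    norm_num
  rw [norm_smul, ← Real.sqrt_sq (norm_nonneg (x + y)), hsq, norm_inv, Real.norm_eq_abs,
    abs_of_nonneg (Real.sqrt_nonneg 2), inv_mul_cancel₀ (by positivity)]

theorem exists_sphere_inner_eq_zero_and_apply_eq {F : Type*} [NormedAddCommGroup F]
    [NormedSpace ℝ F] [FiniteDimensional ℝ F] (h : finrank ℝ F + 2 ≤ finrank ℝ E)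
    {f : sphere (0 : E) 1 → F} (hf : Continuous f) :
    ∃ u v : sphere (0 : E) 1, ⟪(u : E), v⟫ = 0 ∧ f u = f v := by
  have : FiniteDimensional ℝ E := .of_finrank_pos (by lia)
  have : Nontrivial E := nontrivial_of_finrank_pos (R := ℝ) (by lia)
  obtain ⟨e, he⟩ := exists_norm_eq E zero_le_one
  let W := (ℝ ∙ e)ᗮ
  have hW : 1 + finrank ℝ W = finrank ℝ E := by
    rw [← (ℝ ∙ e).finrank_add_finrank_orthogonal,
      finrank_span_singleton (norm_ne_zero_iff.mp (he ▸ one_ne_zero))]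
  have horth (y : W) : ⟪e, (y : E)⟫ = 0 :=
    Submodule.mem_orthogonal_singleton_iff_inner_right.mp y.2
  have hnorm (y : sphere (0 : W) 1) : ‖(y : E)‖ = 1 := norm_eq_of_mem_sphere y
  let u (y : sphere (0 : W) 1) : sphere (0 : E) 1 :=
    ⟨(√2)⁻¹ • (e + (y : E)), by
      simpa using norm_inv_sqrt_two_smul_add_eq_one he (hnorm y) (horth y)⟩
  have hu : Continuous u := Continuous.subtype_mk (by fun_prop) _
  obtain ⟨y, hy⟩ := exists_eq_zero_of_odd_sphere (E := W) (g := fun y => f (u y) - f (u (-y)))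
    (by lia) (by fun_prop) (fun y => by simp)
  refine ⟨u y, u (-y), ?_, sub_eq_zero.mp hy⟩
  have hsum_diff : ⟪e + (y : E), e - (y : E)⟫ = 0 :=
    (real_inner_add_sub_eq_zero_iff _ _).mpr (he.trans (hnorm y).symm)
  simp only [u, coe_neg_sphere, NegMemClass.coe_neg, ← sub_eq_add_neg, real_inner_smul_left,
    real_inner_smul_right, hsum_diff, mul_zero]

theorem flip_stiefel_sphere_two_pairs_general {ι : Type*} [Fintype ι] {F : ι → Type*}
    [∀ i, NormedAddCommGroup (F i)] [∀ i, NormedSpace ℝ (F i)] [∀ i, FiniteDimensional ℝ (F i)]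
    (h : ∑ i, (finrank ℝ (F i) + 2) ≤ finrank ℝ E) {f : ∀ i, sphere (0 : E) 1 → F i}
    (hf : ∀ i, Continuous (f i)) :
    ∃ v : ι → Fin 2 → sphere (0 : E) 1,
      Orthonormal ℝ (fun k : (_ : ι) × Fin 2 => (v k.1 k.2 : E)) ∧
        ∀ i, f i (v i 0) = f i (v i 1) := by
  rcases isEmpty_or_nonempty ι
  · exact ⟨isEmptyElim, by simp, by simp⟩
  have : FiniteDimensional ℝ E := .of_finrank_pos <| lt_of_lt_of_le (by positivity) h
  obtain ⟨V, hV⟩ := exists_orthogonalFamily_of_sum_finrank_le (E := E)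
    (G := fun i => EuclideanSpace ℝ (Fin (finrank ℝ (F i) + 2))) (by simpa using h)
  choose u w huw hf_eq using fun i => exists_sphere_inner_eq_zero_and_apply_eq (by simp)
    ((hf i).comp (continuous_sphereMap (V i)))
  refine ⟨fun i => ![sphereMap (V i) (u i), sphereMap (V i) (w i)], ?_, hf_eq⟩
  have hpair (i : ι) : Orthonormal ℝ ![(u i).1, (w i).1] := by
    simp [huw]
  convert! hV.orthonormal_sigma_orthonormal hpair with k
  obtain ⟨i, j⟩ := k
  fin_cases j <;> rfl

end OrthogonalPairs

/-- For every integer `n ≥ 4` and every continuous map `f : S^{n-1} → ℝ^{⌊n/2⌋ - 2}`,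
there exist pairwise orthogonal `v₁ v₂ v₃ v₄` in the sphere with `f v₁ = f v₂` and
`f v₃ = f v₄`. -/
theorem flip_stiefel_sphere_two_pairs (n : ℕ) (hn : 4 ≤ n)
    (f : Metric.sphere (0 : EuclideanSpace ℝ (Fin n)) 1 → EuclideanSpace ℝ (Fin (n / 2 - 2)))
    (hf : Continuous f) :
    ∃ v₁ v₂ v₃ v₄ : Metric.sphere (0 : EuclideanSpace ℝ (Fin n)) 1,
      ⟪(v₁ : EuclideanSpace ℝ (Fin n)), (v₂ : EuclideanSpace ℝ (Fin n))⟫ = 0 ∧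
      ⟪(v₁ : EuclideanSpace ℝ (Fin n)), (v₃ : EuclideanSpace ℝ (Fin n))⟫ = 0 ∧
      ⟪(v₁ : EuclideanSpace ℝ (Fin n)), (v₄ : EuclideanSpace ℝ (Fin n))⟫ = 0 ∧
      ⟪(v₂ : EuclideanSpace ℝ (Fin n)), (v₃ : EuclideanSpace ℝ (Fin n))⟫ = 0 ∧
      ⟪(v₂ : EuclideanSpace ℝ (Fin n)), (v₄ : EuclideanSpace ℝ (Fin n))⟫ = 0 ∧
      ⟪(v₃ : EuclideanSpace ℝ (Fin n)), (v₄ : EuclideanSpace ℝ (Fin n))⟫ = 0 ∧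
      f v₁ = f v₂ ∧ f v₃ = f v₄ := by
  have hdim : ∑ _ : Fin 2, (Module.finrank ℝ (EuclideanSpace ℝ (Fin (n / 2 - 2))) + 2) ≤
      Module.finrank ℝ (EuclideanSpace ℝ (Fin n)) := by
    simp only [finrank_euclideanSpace_fin, Fin.sum_univ_two]
    lia
  obtain ⟨v, hv, hfv⟩ := flip_stiefel_sphere_two_pairs_general hdim fun _ => hf
  exact ⟨v 0 0, v 0 1, v 1 0, v 1 1, hv.2 (i := ⟨0, 0⟩) (j := ⟨0, 1⟩) (by simp),
    hv.2 (i := ⟨0, 0⟩) (j := ⟨1, 0⟩) (by simp), hv.2 (i := ⟨0, 0⟩) (j := ⟨1, 1⟩) (by simp),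
    hv.2 (i := ⟨0, 1⟩) (j := ⟨1, 0⟩) (by simp), hv.2 (i := ⟨0, 1⟩) (j := ⟨1, 1⟩) (by simp),
    hv.2 (i := ⟨1, 0⟩) (j := ⟨1, 1⟩) (by simp), hfv 0, hfv 1⟩
end

section
/- Let n ≥ 4 and let K_1, …, K_m be nonempty compact convex subsets of ℝ^n with m = ⌊n/2⌋ − 2. Then there exist pairwise orthogonal unit vectors v_1, v_2, v_3, v_4 ∈ ℝ^n such that for every i, w_{K_i}(v_1) = w_{K_i}(v_2) and w_{K_i}(v_3) = w_{K_i}(v_4). (Equivalently, there is an orthogonal decomposition ℝ^n = ℝ^2 ⊕ ℝ^2 ⊕ ℝ^{n-4} such that each region is inscribed in S × S × ℝ^{n-4} where S is a square.) -/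
open scoped RealInnerProductSpace

/-- The width of a set `K ⊆ ℝⁿ` in direction `v`:
`w_K(v) = sup_{x ∈ K} ⟪x, v⟫ − inf_{x ∈ K} ⟪x, v⟫`. -/
noncomputable def dirWidth {n : ℕ} (K : Set (EuclideanSpace ℝ (Fin n)))
    (v : EuclideanSpace ℝ (Fin n)) : ℝ :=
  sSup ((fun x => ⟪x, v⟫) '' K) - sInf ((fun x => ⟪x, v⟫) '' K)

/-!
The width in direction `x` is a continuous function of `x`, so the theorem is about a continuous
map `f` from the unit sphere of `E` to a space `F` of small dimension. Fix a unit vector `a`. For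
unit `x ⟂ a` the vectors `(a ± x) / √2` are orthonormal, and
`x ↦ f ((a + x) / √2) - f ((a - x) / √2)` is odd, so the Borsuk–Ulam theorem on `aᗮ` makes it
vanish somewhere, provided `dim F + 2 ≤ dim E`. Repeating this in the orthogonal complement of the
pair found produces further pairs.

For Borsuk–Ulam, suppose the coordinates of an odd map `g` have antipodal signs `s₁, …, sₖ`. Great
subspheres contract to a pole, which gives, at any mesh, a mod-2 chain `C` (a hemisphere) whose
boundary is the sum of a chain `c` of the same kind one dimension lower and its antipodal image.
As `sᵢ(-x) = sᵢ(x) + 1`, the cup product `δs₁ ⌣ ⋯ ⌣ δsₖ` takes on `C` the value of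
`δs₂ ⌣ ⋯ ⌣ δsₖ` on `c`, hence `1` by induction. Some small simplex of `C` therefore has both signs
of every coordinate, so `g` is small there.
-/

open Metric Module
open scoped unitInterval

/-- Mod-2 chains of ordered simplices in `X`. A simplex is the list of its vertices, repetitions
being allowed; the empty list is kept as a simplex of dimension `-1`. -/
abbrev OrderedChain (X : Type*) : Type _ := List X →₀ ZMod 2

namespace OrderedChain

variable {X Y Z : Type*}

/-- A single ordered simplex, as a chain. -/
noncomputable def simplex (u : List X) : OrderedChain X := Finsupp.single u 1

lemma simplex_apply_nil (u : List X) : simplex u [] = if u = [] then 1 else 0 :=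
  Finsupp.single_apply

lemma linearMap_ext {M : Type*} [AddCommMonoid M] [Module (ZMod 2) M]
    {φ ψ : OrderedChain X →ₗ[ZMod 2] M} (h : ∀ u, φ (simplex u) = ψ (simplex u)) : φ = ψ :=
  Finsupp.lhom_ext' fun u ↦ LinearMap.ext_ring (h u)

/-- The linear operator on chains with prescribed values on simplices. -/
noncomputable def lift {M : Type*} [AddCommMonoid M] [Module (ZMod 2) M] (φ : List X → M) :
    OrderedChain X →ₗ[ZMod 2] M :=
  Finsupp.linearCombination (ZMod 2) φ

@[simp]
lemma lift_simplex {M : Type*} [AddCommMonoid M] [Module (ZMod 2) M] (φ : List X → M)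
    (u : List X) : lift φ (simplex u) = φ u := by
  simp [lift, simplex]

/-- The join with a vertex `x`, put in front of every simplex. -/
noncomputable def cone (x : X) : OrderedChain X →ₗ[ZMod 2] OrderedChain X :=
  lift fun u ↦ simplex (x :: u)

@[simp]
lemma cone_simplex (x : X) (u : List X) : cone x (simplex u) = simplex (x :: u) :=
  lift_simplex _ u

/-- The boundary of a single ordered simplex. -/
noncomputable def simplexBoundary : List X → OrderedChain X
  | [] => 0
  | x :: u => simplex u + cone x (simplexBoundary u)

/-- The augmented boundary operator: the boundary of a vertex is the empty simplex. -/
noncomputable def boundary : OrderedChain X →ₗ[ZMod 2] OrderedChain X :=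
  lift simplexBoundary

@[simp]
lemma boundary_simplex_nil : boundary (simplex ([] : List X)) = 0 :=
  lift_simplex _ _

lemma boundary_simplex_cons (x : X) (u : List X) :
    boundary (simplex (x :: u)) = simplex u + cone x (boundary (simplex u)) := by
  simp [boundary, simplexBoundary]

lemma boundary_cone (x : X) (c : OrderedChain X) :
    boundary (cone x c) = c + cone x (boundary c) := by
  suffices boundary ∘ₗ cone x = LinearMap.id + cone x ∘ₗ boundary from DFunLike.congr_fun this c
  exact linearMap_ext fun u ↦ by simp [boundary_simplex_cons]

@[simp]
lemma boundary_boundary (c : OrderedChain X) : boundary (boundary c) = 0 := by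
  suffices boundary ∘ₗ boundary = (0 : OrderedChain X →ₗ[ZMod 2] _) from DFunLike.congr_fun this c
  refine linearMap_ext fun u ↦ ?_
  induction u with
  | nil => simp
  | cons x u ih =>
    simp only [LinearMap.comp_apply, LinearMap.zero_apply] at ih ⊢
    rw [boundary_simplex_cons, map_add, boundary_cone, ih, map_zero, add_zero, ZModModule.add_self]

/-- The chain map induced by a map of vertices. -/
noncomputable def map (f : X → Y) : OrderedChain X →ₗ[ZMod 2] OrderedChain Y :=
  lift fun u ↦ simplex (u.map f)

@[simp]
lemma map_simplex (f : X → Y) (u : List X) : map f (simplex u) = simplex (u.map f) :=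
  lift_simplex _ u

lemma map_cone (f : X → Y) (x : X) (c : OrderedChain X) :
    map f (cone x c) = cone (f x) (map f c) := by
  suffices map f ∘ₗ cone x = cone (f x) ∘ₗ map f from DFunLike.congr_fun this c
  exact linearMap_ext fun u ↦ by simp

lemma map_map (g : Y → Z) (f : X → Y) (c : OrderedChain X) :
    map g (map f c) = map (g ∘ f) c := by
  suffices map g ∘ₗ map f = map (g ∘ f) from DFunLike.congr_fun this c
  exact linearMap_ext fun u ↦ by simp

@[simp]
lemma map_id (c : OrderedChain X) : map id c = c := by
  suffices map id = (LinearMap.id : OrderedChain X →ₗ[ZMod 2] _) from DFunLike.congr_fun this c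
  exact linearMap_ext fun u ↦ by simp

lemma boundary_map (f : X → Y) (c : OrderedChain X) :
    boundary (map f c) = map f (boundary c) := by
  suffices boundary ∘ₗ map f = map f ∘ₗ boundary from DFunLike.congr_fun this c
  refine linearMap_ext fun u ↦ ?_
  induction u with
  | nil => simp
  | cons x u ih =>
    simp only [LinearMap.comp_apply, map_simplex] at ih
    simp [boundary_simplex_cons, map_cone, ih]

/-- The prism over a single ordered simplex, joining its image under `f` to that under `g`. -/
noncomputable def simplexPrism (f g : X → Y) : List X → OrderedChain Y
  | [] => 0
  | x :: u => simplex (f x :: g x :: u.map g) + cone (f x) (simplexPrism f g u)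

/-- The prism operator, a chain homotopy between `map f` and `map g`. -/
noncomputable def prism (f g : X → Y) : OrderedChain X →ₗ[ZMod 2] OrderedChain Y :=
  lift (simplexPrism f g)

@[simp]
lemma prism_simplex_nil (f g : X → Y) : prism f g (simplex []) = 0 :=
  lift_simplex _ _

lemma prism_simplex_cons (f g : X → Y) (x : X) (u : List X) :
    prism f g (simplex (x :: u)) =
      simplex (f x :: g x :: u.map g) + cone (f x) (prism f g (simplex u)) := by
  simp [prism, simplexPrism]

lemma prism_cone (f g : X → Y) (x : X) (c : OrderedChain X) :
    prism f g (cone x c) = cone (f x) (cone (g x) (map g c) + prism f g c) := by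
  suffices prism f g ∘ₗ cone x = cone (f x) ∘ₗ (cone (g x) ∘ₗ map g + prism f g) from
    DFunLike.congr_fun this c
  exact linearMap_ext fun u ↦ by simp [prism_simplex_cons]

lemma boundary_prism (f g : X → Y) (c : OrderedChain X) :
    boundary (prism f g c) = map f c + map g c + prism f g (boundary c) := by
  suffices boundary ∘ₗ prism f g = map f + map g + prism f g ∘ₗ boundary from
    DFunLike.congr_fun this c
  refine linearMap_ext fun u ↦ ?_
  simp only [LinearMap.comp_apply, LinearMap.add_apply, map_simplex]
  induction u with
  | nil => simp [ZModModule.add_self]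
  | cons x u ih =>
    have cancel := ZModModule.add_self (cone (f x) (simplex (u.map g)))
    simp only [← cone_simplex, ← map_simplex, map_cone, prism_cone, boundary_cone, boundary_map,
      map_add, ih] at cancel ⊢
    linear_combination (norm := module) cancel

lemma boundary_sum_prism {L : OrderedChain X} (hL : boundary L = 0) (F : ℕ → X → Y) (N : ℕ) :
    boundary (∑ j ∈ Finset.range N, prism (F j) (F (j + 1)) L) = map (F 0) L + map (F N) L := by
  simp only [map_sum, boundary_prism, hL, map_zero, add_zero]
  simpa only [ZModModule.sub_eq_add, add_comm] using
    Finset.sum_range_sub (fun j ↦ map (F j) L) N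

/-- The chains all of whose simplices lie in `S`. -/
abbrev chainsIn (S : Set (List X)) : Submodule (ZMod 2) (OrderedChain X) :=
  Finsupp.supported (ZMod 2) (ZMod 2) S

lemma simplex_mem_chainsIn {S : Set (List X)} {u : List X} (hu : u ∈ S) : simplex u ∈ chainsIn S :=
  Finsupp.single_mem_supported _ _ hu

lemma apply_mem_of_mem_chainsIn {M : Type*} [AddCommMonoid M] [Module (ZMod 2) M]
    {φ : OrderedChain X →ₗ[ZMod 2] M} {p : Submodule (ZMod 2) M} {S : Set (List X)}
    (h : ∀ u ∈ S, φ (simplex u) ∈ p) {c : OrderedChain X} (hc : c ∈ chainsIn S) : φ c ∈ p := by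
  rw [chainsIn, Finsupp.supported_eq_span_single] at hc
  suffices Submodule.span (ZMod 2) ((fun u ↦ simplex u) '' S) ≤ p.comap φ from this hc
  exact Submodule.span_le.2 (Set.image_subset_iff.2 h)

lemma cone_mem_chainsIn {S T : Set (List X)} {x : X} (h : ∀ u ∈ S, x :: u ∈ T)
    {c : OrderedChain X} (hc : c ∈ chainsIn S) : cone x c ∈ chainsIn T :=
  apply_mem_of_mem_chainsIn (fun u hu ↦ by simpa using simplex_mem_chainsIn (h u hu)) hc

lemma map_mem_chainsIn {S : Set (List X)} {T : Set (List Y)} {f : X → Y}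
    (h : ∀ u ∈ S, u.map f ∈ T) {c : OrderedChain X} (hc : c ∈ chainsIn S) : map f c ∈ chainsIn T :=
  apply_mem_of_mem_chainsIn (fun u hu ↦ by simpa using simplex_mem_chainsIn (h u hu)) hc

lemma boundary_simplex_mem_chainsIn (u : List X) :
    boundary (simplex u) ∈ chainsIn {v | v ⊆ u} := by
  induction u with
  | nil => simp
  | cons x u ih =>
    rw [boundary_simplex_cons]
    refine add_mem (simplex_mem_chainsIn (List.subset_cons_self x u)) ?_
    exact cone_mem_chainsIn (fun v hv ↦ List.cons_subset_cons x hv) ih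

lemma prism_simplex_mem_chainsIn (f g : X → Y) (u : List X) :
    prism f g (simplex u) ∈ chainsIn {v | v ⊆ u.map f ++ u.map g} := by
  induction u with
  | nil => simp
  | cons x u ih =>
    rw [prism_simplex_cons]
    refine add_mem (simplex_mem_chainsIn ?_) (cone_mem_chainsIn (fun v hv ↦ ?_) ih)
    · simp
    · simp only [Set.mem_ofPred_eq, List.subset_def] at hv ⊢
      grind

/-- Multiplication of each simplex by the value of `s` at its first vertex: the cap product with
the `0`-cochain `s`. -/
noncomputable def headMul (s : X → ZMod 2) : OrderedChain X →ₗ[ZMod 2] OrderedChain X :=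
  lift fun u ↦ u.head?.elim 0 s • simplex u

@[simp]
lemma headMul_simplex_nil (s : X → ZMod 2) : headMul s (simplex []) = 0 := by
  simp [headMul]

@[simp]
lemma headMul_simplex_cons (s : X → ZMod 2) (x : X) (u : List X) :
    headMul s (simplex (x :: u)) = s x • simplex (x :: u) := by
  simp [headMul]

lemma headMul_map (s : Y → ZMod 2) (f : X → Y) (c : OrderedChain X) :
    headMul s (map f c) = map f (headMul (s ∘ f) c) := by
  suffices headMul s ∘ₗ map f = map f ∘ₗ headMul (s ∘ f) from DFunLike.congr_fun this c
  exact linearMap_ext fun u ↦ by cases u <;> simp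

lemma headMul_mem_chainsIn {S : Set (List X)} (s : X → ZMod 2) {c : OrderedChain X}
    (hc : c ∈ chainsIn S) : headMul s c ∈ chainsIn S :=
  apply_mem_of_mem_chainsIn
    (fun u hu ↦ by simpa [headMul] using Submodule.smul_mem _ _ (simplex_mem_chainsIn hu)) hc

/-- The cup product `δs₁ ⌣ ⋯ ⌣ δsₖ` of the coboundaries of `0`-cochains, built up as
`δ (s₁ ⌣ (δs₂ ⌣ ⋯ ⌣ δsₖ))`. The empty product, which counts vertices, is likewise the coboundary of
the cochain that counts empty simplices. -/
noncomputable def cupCoboundaries : List (X → ZMod 2) → OrderedChain X →ₗ[ZMod 2] ZMod 2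
  | [] => Finsupp.lapply [] ∘ₗ boundary
  | s :: ss => cupCoboundaries ss ∘ₗ headMul s ∘ₗ boundary

lemma cupCoboundaries_cons (s : X → ZMod 2) (ss : List (X → ZMod 2)) (c : OrderedChain X) :
    cupCoboundaries (s :: ss) c = cupCoboundaries ss (headMul s (boundary c)) :=
  rfl

@[simp]
lemma cupCoboundaries_boundary (ss : List (X → ZMod 2)) (c : OrderedChain X) :
    cupCoboundaries ss (boundary c) = 0 := by
  cases ss <;> simp [cupCoboundaries]

@[simp]
lemma cupCoboundaries_simplex_nil (ss : List (X → ZMod 2)) :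
    cupCoboundaries ss (simplex []) = 0 := by
  cases ss <;> simp [cupCoboundaries]

lemma cupCoboundaries_nil_vertex (x : X) : cupCoboundaries [] (simplex [x]) = 1 := by
  have boundary_vertex : boundary (simplex [x]) = simplex [] := by simp [boundary_simplex_cons]
  simp [cupCoboundaries, boundary_vertex, simplex_apply_nil]

lemma map_apply_nil (f : X → Y) (c : OrderedChain X) : map f c [] = c [] := by
  suffices Finsupp.lapply [] ∘ₗ map f = Finsupp.lapply (R := ZMod 2) [] from
    DFunLike.congr_fun this c
  exact linearMap_ext fun u ↦ by simp [simplex_apply_nil]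

lemma cupCoboundaries_map (ss : List (Y → ZMod 2)) (f : X → Y) (c : OrderedChain X) :
    cupCoboundaries ss (map f c) = cupCoboundaries (ss.map (· ∘ f)) c := by
  induction ss generalizing c with
  | nil => simp [cupCoboundaries, boundary_map, map_apply_nil]
  | cons s ss ih => simp only [List.map_cons, cupCoboundaries_cons, boundary_map, headMul_map, ih]

lemma cupCoboundaries_headMul_of_const {s : X → ZMod 2} (ss : List (X → ZMod 2)) {a : ZMod 2}
    {u : List X} (hu : ∀ x ∈ u, s x = a) {c : OrderedChain X} (hc : c ∈ chainsIn {v | v ⊆ u}) :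
    cupCoboundaries ss (headMul s c) = a * cupCoboundaries ss c := by
  suffices (cupCoboundaries ss ∘ₗ headMul s - a • cupCoboundaries ss) c ∈
      (⊥ : Submodule (ZMod 2) (ZMod 2)) by
    simpa [sub_eq_zero] using this
  refine apply_mem_of_mem_chainsIn (fun v hv ↦ ?_) hc
  cases v with
  | nil => simp
  | cons x v => simp [hu x (hv List.mem_cons_self)]

lemma cupCoboundaries_simplex_eq_zero {ss : List (X → ZMod 2)} {s : X → ZMod 2} (hs : s ∈ ss)
    {u : List X} (hu : ∀ x ∈ u, ∀ y ∈ u, s x = s y) : cupCoboundaries ss (simplex u) = 0 := by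
  induction ss generalizing u with
  | nil => simp at hs
  | cons t ss ih =>
    rw [cupCoboundaries_cons]
    rcases List.mem_cons.1 hs with rfl | hs
    · cases u with
      | nil => simp
      | cons x u =>
        rw [cupCoboundaries_headMul_of_const ss (fun y hy ↦ hu y hy x List.mem_cons_self)
          (boundary_simplex_mem_chainsIn _), cupCoboundaries_boundary, mul_zero]
    · have faces := headMul_mem_chainsIn t (boundary_simplex_mem_chainsIn u)
      refine (Submodule.mem_bot (ZMod 2)).1 (apply_mem_of_mem_chainsIn (fun v hv ↦ ?_) faces)
      exact ih hs fun x hx y hy ↦ hu x (hv hx) y (hv hy)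

lemma exists_simplex_of_cupCoboundaries_ne_zero {S : Set (List X)}
    {ss : List (X → ZMod 2)} {c : OrderedChain X} (hc : c ∈ chainsIn S)
    (h : cupCoboundaries ss c ≠ 0) : ∃ u ∈ S, cupCoboundaries ss (simplex u) ≠ 0 := by
  contrapose! h
  exact (Submodule.mem_bot (ZMod 2)).1 (apply_mem_of_mem_chainsIn h hc)

lemma cupCoboundaries_headMul_map {ν : X → X} {s : X → ZMod 2} (hs : ∀ x, s (ν x) = s x + 1)
    {ss : List (X → ZMod 2)} (hss : ∀ c, cupCoboundaries ss (map ν c) = cupCoboundaries ss c)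
    (c : OrderedChain X) :
    cupCoboundaries ss (headMul s (map ν c)) =
      cupCoboundaries ss (headMul s c) + cupCoboundaries ss c := by
  suffices cupCoboundaries ss ∘ₗ headMul s ∘ₗ map ν =
      cupCoboundaries ss ∘ₗ headMul s + cupCoboundaries ss from DFunLike.congr_fun this c
  refine linearMap_ext fun u ↦ ?_
  have invariant := hss (simplex u)
  cases u with
  | nil => simp
  | cons x u =>
    simp only [map_simplex, List.map_cons] at invariant
    simp [hs, invariant, add_mul]

lemma cupCoboundaries_map_of_flip {ν : X → X} {ss : List (X → ZMod 2)}
    (hss : ∀ s ∈ ss, ∀ x, s (ν x) = s x + 1) (c : OrderedChain X) :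
    cupCoboundaries ss (map ν c) = cupCoboundaries ss c := by
  induction ss generalizing c with
  | nil => exact cupCoboundaries_map [] ν c
  | cons s ss ih =>
    rw [List.forall_mem_cons] at hss
    rw [cupCoboundaries_cons, boundary_map, cupCoboundaries_headMul_map hss.1 (ih hss.2),
      cupCoboundaries_boundary, add_zero, cupCoboundaries_cons]

lemma cupCoboundaries_cons_of_boundary_eq {ν : X → X} {s : X → ZMod 2} {ss : List (X → ZMod 2)}
    (hs : ∀ x, s (ν x) = s x + 1) (hss : ∀ t ∈ ss, ∀ x, t (ν x) = t x + 1) {c C : OrderedChain X}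
    (hC : boundary C = c + map ν c) : cupCoboundaries (s :: ss) C = cupCoboundaries ss c := by
  rw [cupCoboundaries_cons, hC, map_add, map_add,
    cupCoboundaries_headMul_map hs (cupCoboundaries_map_of_flip hss), ← add_assoc,
    ZModModule.add_self, zero_add]

lemma boundary_add_map_eq_zero {ν : X → X} (hν : ν.Involutive) {c C : OrderedChain X}
    (hC : boundary C = c + map ν c) : boundary (C + map ν C) = 0 := by
  rw [map_add, boundary_map, hC, map_add, map_map, hν.comp_self, map_id, add_comm (map ν c),
    ZModModule.add_self]

lemma map_const_add_map_eq_zero (ν : X → X) (y : Y) (c : OrderedChain X) :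
    map (fun _ ↦ y) (c + map ν c) = 0 := by
  rw [map_add, map_map]
  exact ZModModule.add_self _

section Metric

variable [PseudoMetricSpace X] [PseudoMetricSpace Y]

/-- The chains of mesh less than `ε`. -/
def smallChains (X : Type*) [PseudoMetricSpace X] (ε : ℝ) : Submodule (ZMod 2) (OrderedChain X) :=
  chainsIn {u | ∀ x ∈ u, ∀ y ∈ u, dist x y < ε}

lemma map_mem_smallChains {f : X → Y} (hf : Isometry f) {ε : ℝ} {c : OrderedChain X}
    (hc : c ∈ smallChains X ε) : map f c ∈ smallChains Y ε :=
  map_mem_chainsIn (fun u hu ↦ by simpa [hf.dist_eq] using hu) hc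

lemma prism_mem_smallChains {f g : X → Y} {δ ε : ℝ}
    (hff : ∀ x y, dist x y < δ → dist (f x) (f y) < ε)
    (hfg : ∀ x y, dist x y < δ → dist (f x) (g y) < ε)
    (hgg : ∀ x y, dist x y < δ → dist (g x) (g y) < ε)
    {c : OrderedChain X} (hc : c ∈ smallChains X δ) : prism f g c ∈ smallChains Y ε := by
  refine apply_mem_of_mem_chainsIn (fun u hu ↦ ?_) hc
  refine Finsupp.supported_mono (fun v hv ↦ ?_) (prism_simplex_mem_chainsIn f g u)
  intro y hy y' hy'
  have hy := hv hy
  have hy' := hv hy'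
  simp only [List.mem_append, List.mem_map] at hy hy'
  rcases hy with ⟨x, hx, rfl⟩ | ⟨x, hx, rfl⟩ <;> rcases hy' with ⟨x', hx', rfl⟩ | ⟨x', hx', rfl⟩
  · exact hff _ _ (hu x hx x' hx')
  · exact hfg _ _ (hu x hx x' hx')
  · exact dist_comm (f x') (g x) ▸ hfg _ _ (hu x' hx' x hx)
  · exact hgg _ _ (hu x hx x' hx')

theorem exists_smallChains_boundary_eq_map_add_map [CompactSpace X] {f g : C(X, Y)}
    (hfg : f.Homotopic g) {ε : ℝ} (hε : 0 < ε) :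
    ∃ δ > 0, ∀ L ∈ smallChains X δ, boundary L = 0 →
      ∃ C ∈ smallChains Y ε, boundary C = map f L + map g L := by
  obtain ⟨H⟩ := hfg
  obtain ⟨δ, hδ, H_close⟩ := Metric.uniformContinuous_iff.1
    (CompactSpace.uniformContinuous_of_continuous H.continuous) ε hε
  obtain ⟨N, hN⟩ := exists_nat_one_div_lt hδ
  let time (j : ℕ) : I := Set.projIcc 0 1 zero_le_one ((j : ℝ) / (N + 1))
  have dist_time (j : ℕ) : dist (time j) (time (j + 1)) < δ := by
    refine lt_of_le_of_lt ((LipschitzWith.projIcc _).dist_le_mul _ _) ?_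
    rw [Real.dist_eq, ← sub_div]
    simpa [abs_div, abs_of_pos (Nat.cast_add_one_pos (α := ℝ) N)] using hN
  let F (j : ℕ) (x : X) : Y := H (time j, x)
  have F_zero : F 0 = f := by ext; simp [F, time]
  have F_last : F (N + 1) = g := by
    ext; simp [F, time, div_self (Nat.cast_add_one_ne_zero (R := ℝ) N)]
  refine ⟨δ, hδ, fun L hL L_cycle ↦ ⟨∑ j ∈ Finset.range (N + 1), prism (F j) (F (j + 1)) L, ?_, ?_⟩⟩
  · refine Submodule.sum_mem _ fun j _ ↦ prism_mem_smallChains ?_ ?_ ?_ hL <;>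
      refine fun x y hxy ↦ H_close (max_lt ?_ hxy)
    exacts [by simpa using hδ, dist_time j, by simpa using hδ]
  · rw [boundary_sum_prism L_cycle, F_zero, F_last]

end Metric

end OrderedChain

open OrderedChain

section Sphere

lemma isometry_neg_unitSphere {E : Type*} [SeminormedAddCommGroup E] :
    Isometry (Neg.neg : sphere (0 : E) 1 → sphere (0 : E) 1) :=
  fun x y ↦ edist_neg_neg (x : E) y

variable {E : Type*} [NormedAddCommGroup E] [InnerProductSpace ℝ E]

/-- The unit sphere of a subspace as a great subsphere of the unit sphere. -/
def unitSphereInclusion (U : Submodule ℝ E) : C(sphere (0 : U) 1, sphere (0 : E) 1) where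
  toFun x := ⟨(x : U), mem_sphere_zero_iff_norm.2 (norm_eq_of_mem_sphere x)⟩

lemma norm_cos_smul_add_sin_smul {x y : E} (hx : ‖x‖ = 1) (hy : ‖y‖ = 1) (hxy : ⟪x, y⟫ = 0)
    (θ : ℝ) : ‖Real.cos θ • x + Real.sin θ • y‖ = 1 := by
  have orthogonal : ⟪Real.cos θ • x, Real.sin θ • y⟫ = 0 := by
    simp [real_inner_smul_left, real_inner_smul_right, hxy]
  have norm_sq := norm_add_sq_eq_norm_sq_add_norm_sq_real orthogonal
  rw [← sq_eq_sq₀ (norm_nonneg _) zero_le_one]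
  simpa [norm_smul, hx, hy, ← sq, Real.cos_sq_add_sin_sq] using norm_sq

lemma unitSphereInclusion_homotopic_const {U : Submodule ℝ E} {e : sphere (0 : E) 1}
    (he : (e : E) ∈ Uᗮ) : (unitSphereInclusion U).Homotopic (.const _ e) := by
  refine ⟨⟨⟨fun p ↦ ⟨Real.cos (Real.pi / 2 * p.1) • (p.2 : E) + Real.sin (Real.pi / 2 * p.1) • e,
    ?_⟩, ?_⟩, fun x ↦ ?_, fun x ↦ ?_⟩⟩
  · rw [mem_sphere_zero_iff_norm]
    exact norm_cos_smul_add_sin_smul (norm_eq_of_mem_sphere (unitSphereInclusion U p.2))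
      (norm_eq_of_mem_sphere e) (U.inner_right_of_mem_orthogonal p.2.1.2 he) _
  · fun_prop
  · ext; simp [unitSphereInclusion]
  · ext; simp

lemma exists_unit_vector_finrank_orthogonal (h : 0 < finrank ℝ E) :
    ∃ e : sphere (0 : E) 1, finrank ℝ (ℝ ∙ (e : E))ᗮ + 1 = finrank ℝ E := by
  have := FiniteDimensional.of_finrank_pos h
  have := finrank_pos_iff.1 h
  obtain ⟨e, he⟩ := NormedSpace.sphere_nonempty (x := (0 : E)).2 zero_le_one
  have finrank_span : finrank ℝ (ℝ ∙ e) = 1 :=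
    finrank_span_singleton (ne_zero_of_mem_unit_sphere ⟨e, he⟩)
  have finrank_add := (ℝ ∙ e).finrank_add_finrank_orthogonal
  exact ⟨⟨e, he⟩, by rw [← finrank_add, finrank_span, add_comm]⟩

lemma exists_smallChains_boundary_eq_double_map_inclusion {U : Submodule ℝ E}
    [FiniteDimensional ℝ U] {e : sphere (0 : E) 1} (he : (e : E) ∈ Uᗮ) {ε : ℝ} (hε : 0 < ε) :
    ∃ δ > 0, ∀ c ∈ smallChains (sphere (0 : U) 1) δ, boundary (c + map Neg.neg c) = 0 →
      ∃ C ∈ smallChains (sphere (0 : E) 1) ε, boundary C =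
        map (unitSphereInclusion U) c + map Neg.neg (map (unitSphereInclusion U) c) := by
  obtain ⟨δ, hδ, fill⟩ := exists_smallChains_boundary_eq_map_add_map
    (unitSphereInclusion_homotopic_const he) hε
  refine ⟨δ, hδ, fun c hc c_cycle ↦ ?_⟩
  obtain ⟨C, hC, boundary_C⟩ := fill (c + map Neg.neg c)
    (add_mem hc (map_mem_smallChains isometry_neg_unitSphere hc)) c_cycle
  have pole_part : map (ContinuousMap.const _ e) (c + map Neg.neg c) = 0 :=
    map_const_add_map_eq_zero Neg.neg e c
  refine ⟨C, hC, ?_⟩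
  rw [boundary_C, pole_part, add_zero, map_add, map_map, map_map]
  rfl

theorem exists_smallChains_cupCoboundaries_eq_one {ss : List (sphere (0 : E) 1 → ZMod 2)}
    (hlen : ss.length < finrank ℝ E) (antipodal : ∀ s ∈ ss, ∀ x, s (-x) = s x + 1)
    {ε : ℝ} (hε : 0 < ε) :
    ∃ c ∈ smallChains (sphere (0 : E) 1) ε,
      boundary (c + map Neg.neg c) = 0 ∧ cupCoboundaries ss c = 1 := by
  generalize hk : ss.length = k at hlen
  induction k generalizing E ε with
  | zero =>
    obtain ⟨e, -⟩ := exists_unit_vector_finrank_orthogonal hlen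
    obtain rfl := List.length_eq_zero_iff.1 hk
    refine ⟨simplex [e], simplex_mem_chainsIn fun x hx y hy ↦ ?_, ?_, cupCoboundaries_nil_vertex e⟩
    · rwa [List.mem_singleton.1 hx, List.mem_singleton.1 hy, dist_self]
    · rw [map_add, boundary_map]
      simp [boundary_simplex_cons, ZModModule.add_self]
  | succ k ih =>
    have := FiniteDimensional.of_finrank_pos (k.succ_pos.trans hlen)
    obtain ⟨e, finrank_orthogonal⟩ := exists_unit_vector_finrank_orthogonal (k.succ_pos.trans hlen)
    obtain ⟨s, ss, rfl⟩ := List.exists_cons_of_length_eq_add_one hk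
    obtain ⟨antipodal_head, antipodal_tail⟩ := List.forall_mem_cons.1 antipodal
    let ι := unitSphereInclusion (ℝ ∙ (e : E))ᗮ
    obtain ⟨δ, hδ, hemisphere⟩ := exists_smallChains_boundary_eq_double_map_inclusion
      (Submodule.le_orthogonal_orthogonal _ (Submodule.mem_span_singleton_self (e : E))) hε
    obtain ⟨c, hc, c_cycle, cup_c⟩ := ih (ss := ss.map (· ∘ ι))
      (List.forall_mem_map.2 fun t ht x ↦ antipodal_tail t ht (ι x)) hδ (by simpa using hk)
      (by omega)
    obtain ⟨C, hC, boundary_C⟩ := hemisphere c hc c_cycle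
    refine ⟨C, hC, boundary_add_map_eq_zero neg_involutive boundary_C, ?_⟩
    rw [cupCoboundaries_cons_of_boundary_eq antipodal_head antipodal_tail boundary_C,
      cupCoboundaries_map, cup_c]

end Sphere

section BorsukUlam

lemma exists_antipodal_sign {X : Type*} [InvolutiveNeg X] (hX : ∀ x : X, x ≠ -x) :
    ∃ s : X → ZMod 2, ∀ x, s (-x) = s x + 1 := by
  classical
  let _ : LinearOrder X := linearOrderOfSTO WellOrderingRel
  refine ⟨fun x ↦ if x < -x then 1 else 0, fun x ↦ ?_⟩
  rcases lt_or_gt_of_ne (hX x) with h | h <;> simp [h, h.le, CharTwo.add_self_eq_zero]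

lemma exists_antipodal_sign_of_odd {X : Type*} [InvolutiveNeg X] (hX : ∀ x : X, x ≠ -x)
    {g : X → ℝ} (hg : g.Odd) :
    ∃ s : X → ZMod 2, (∀ x, s (-x) = s x + 1) ∧ ∀ x y, s x ≠ s y → g x * g y ≤ 0 := by
  obtain ⟨s₀, hs₀⟩ := exists_antipodal_sign hX
  refine ⟨fun x ↦ if 0 < g x then 1 else if g x < 0 then 0 else s₀ x, fun x ↦ ?_, fun x y ↦ ?_⟩
  · have := hg x
    rcases lt_trichotomy (g x) 0 with h | h | h <;>
      simp [this, h, h.le, hs₀, CharTwo.add_self_eq_zero]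
  · contrapose!
    rw [mul_pos_iff]
    rintro (⟨hx, hy⟩ | ⟨hx, hy⟩)
    · simp [hx, hy]
    · simp [hx, hy, hx.not_gt, hy.not_gt]

lemma abs_lt_of_abs_sub_lt_of_mul_nonpos {a b c ε : ℝ} (hab : a * b ≤ 0) (ha : |c - a| < ε)
    (hb : |c - b| < ε) : |c| < ε := by
  rw [abs_lt] at *
  rcases mul_nonpos_iff.1 hab with h | h <;> constructor <;> linarith

variable {E : Type*} [NormedAddCommGroup E] [InnerProductSpace ℝ E]

lemma exists_norm_lt_of_odd {ι : Type*} [Fintype ι] (h : Fintype.card ι < finrank ℝ E)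
    {g : sphere (0 : E) 1 → ι → ℝ} (hg : Continuous g) (hodd : g.Odd) {ε : ℝ} (hε : 0 < ε) :
    ∃ x, ‖g x‖ < ε := by
  have := FiniteDimensional.of_finrank_pos (Nat.zero_lt_of_lt h)
  obtain ⟨δ, hδ, g_close⟩ := Metric.uniformContinuous_iff.1
    (CompactSpace.uniformContinuous_of_continuous hg) ε hε
  choose s antipodal opposite using fun i ↦ exists_antipodal_sign_of_odd
    (ne_neg_of_mem_unit_sphere ℝ) (g := fun x ↦ g x i) (fun x ↦ congrFun (hodd x) i)
  obtain ⟨c, hc, -, cup_c⟩ := exists_smallChains_cupCoboundaries_eq_one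
    (ss := Finset.univ.toList.map s) (by simpa using h) (by simpa using antipodal) hδ
  obtain ⟨u, hu, cup_u⟩ := exists_simplex_of_cupCoboundaries_ne_zero hc
    (cup_c.trans_ne one_ne_zero)
  obtain ⟨z, hz⟩ := List.exists_mem_of_ne_nil u
    (by rintro rfl; exact cup_u (cupCoboundaries_simplex_nil _))
  refine ⟨z, (pi_norm_lt_iff hε).2 fun i ↦ ?_⟩
  have close {x} (hx : x ∈ u) : |g z i - g x i| < ε :=
    (dist_le_pi_dist (g z) (g x) i).trans_lt (g_close (hu z hz x hx))
  obtain ⟨x, hx, y, hy, hxy⟩ : ∃ x ∈ u, ∃ y ∈ u, s i x ≠ s i y := by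
    contrapose! cup_u
    exact cupCoboundaries_simplex_eq_zero (by simp) cup_u
  exact abs_lt_of_abs_sub_lt_of_mul_nonpos (opposite i x y hxy) (close hx) (close hy)

theorem borsuk_ulam {F : Type*} [NormedAddCommGroup F] [NormedSpace ℝ F] [FiniteDimensional ℝ F]
    (h : finrank ℝ F < finrank ℝ E) {g : sphere (0 : E) 1 → F} (hg : Continuous g)
    (hodd : g.Odd) : ∃ x, g x = 0 := by
  have := FiniteDimensional.of_finrank_pos (Nat.zero_lt_of_lt h)
  let coords := (finBasis ℝ F).equivFunL
  have near_zero {ε : ℝ} (hε : 0 < ε) : ∃ x, ‖coords (g x)‖ < ε :=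
    exists_norm_lt_of_odd (by simpa using h) (coords.continuous.comp hg)
      (fun x ↦ by simp [hodd x]) hε
  have : Nonempty (sphere (0 : E) 1) := (near_zero one_pos).nonempty
  obtain ⟨x, -, hx⟩ := isCompact_univ.exists_isMinOn Set.univ_nonempty
    (coords.continuous.comp hg).norm.continuousOn
  refine ⟨x, ?_⟩
  by_contra hne
  obtain ⟨y, hy⟩ := near_zero (norm_pos_iff.2 (coords.map_ne_zero_iff.2 hne))
  exact hy.not_ge (hx (Set.mem_univ y))

end BorsukUlam

section OrthonormalPairs

variable {E : Type*} [NormedAddCommGroup E] [InnerProductSpace ℝ E]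

lemma orthonormal_finCons {ι : Type*} {k : ℕ} {v : ι → E} (hv : Orthonormal ℝ v)
    {w : Fin k × ι → (Submodule.span ℝ (Set.range v))ᗮ} (hw : Orthonormal ℝ w) :
    Orthonormal ℝ fun p : Fin (k + 1) × ι ↦
      Fin.cons (α := fun _ ↦ ι → E) v (fun j i ↦ w (j, i)) p.1 p.2 := by
  have cross (i : ι) (q : Fin k × ι) : ⟪v i, (w q : E)⟫ = 0 :=
    Submodule.inner_right_of_mem_orthogonal (Submodule.subset_span (Set.mem_range_self i)) (w q).2
  constructor
  · rintro ⟨j, i⟩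
    cases j using Fin.cases with
    | zero => exact hv.1 i
    | succ j => exact hw.1 (j, i)
  · rintro ⟨j, i⟩ ⟨j', i'⟩ hne
    cases j using Fin.cases <;> cases j' using Fin.cases
    · exact hv.2 (by simpa using hne)
    · exact cross _ _
    · exact (real_inner_comm _ _).trans (cross _ _)
    · exact hw.2 (by simpa using hne)

lemma orthonormal_pair_smul_add_smul_sub {a b : E} (h : Orthonormal ℝ ![a, b]) :
    Orthonormal ℝ ![(√2)⁻¹ • (a + b), (√2)⁻¹ • (a - b)] := by
  obtain ⟨ha, hb, hab⟩ : ‖a‖ = 1 ∧ ‖b‖ = 1 ∧ ⟪a, b⟫ = 0 := by simpa [and_comm, and_assoc] using h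
  have hadd : ‖a + b‖ = √2 := by
    rw [norm_add_eq_sqrt_iff_real_inner_eq_zero.2 hab, ha, hb]; norm_num
  have hsub : ‖a - b‖ = √2 := by
    rw [norm_sub_eq_sqrt_iff_real_inner_eq_zero.2 hab, ha, hb]; norm_num
  have orthogonal : ⟪a + b, a - b⟫ = 0 := by
    rw [real_inner_add_sub_eq_zero_iff, ha, hb]
  simp [-smul_add, norm_smul, hadd, hsub, real_inner_smul_left, real_inner_smul_right, orthogonal,
    abs_of_pos]

variable {F : Type*} [NormedAddCommGroup F] [NormedSpace ℝ F] [FiniteDimensional ℝ F]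

theorem exists_orthonormal_pair_map_eq (h : finrank ℝ F + 2 ≤ finrank ℝ E) {f : E → F}
    (hf : ContinuousOn f (sphere 0 1)) :
    ∃ v : Fin 2 → E, Orthonormal ℝ v ∧ f (v 0) = f (v 1) := by
  obtain ⟨a, finrank_orthogonal⟩ := exists_unit_vector_finrank_orthogonal (E := E) (by omega)
  have orthonormal (x : sphere (0 : (ℝ ∙ (a : E))ᗮ) 1) :
      Orthonormal ℝ ![(√2)⁻¹ • ((a : E) + x), (√2)⁻¹ • ((a : E) - x)] := by
    refine orthonormal_pair_smul_add_smul_sub ?_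
    have hx := Submodule.mem_orthogonal_singleton_iff_inner_right.1 x.1.2
    have norm_x : ‖(x : E)‖ = 1 := norm_eq_of_mem_sphere (unitSphereInclusion _ x)
    simp [hx, norm_x]
  let g (x : sphere (0 : (ℝ ∙ (a : E))ᗮ) 1) : F :=
    f ((√2)⁻¹ • ((a : E) + x)) - f ((√2)⁻¹ • ((a : E) - x))
  have continuous_g : Continuous g := by
    refine .sub ?_ ?_ <;> refine hf.comp_continuous (by fun_prop) fun x ↦ ?_ <;>
      rw [mem_sphere_zero_iff_norm]
    exacts [(orthonormal x).norm_eq_one 0, (orthonormal x).norm_eq_one 1]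
  obtain ⟨x, hx⟩ := borsuk_ulam (by omega) continuous_g fun x ↦ by simp [g, sub_eq_add_neg]
  exact ⟨_, orthonormal x, sub_eq_zero.1 hx⟩

theorem squares_inscribe_two_general {k : ℕ} (h : finrank ℝ F + 2 * k ≤ finrank ℝ E) {f : E → F}
    (hf : ContinuousOn f (sphere 0 1)) :
    ∃ v : Fin k × Fin 2 → E, Orthonormal ℝ v ∧ ∀ j, f (v (j, 0)) = f (v (j, 1)) := by
  induction k generalizing E with
  | zero => exact ⟨fun p ↦ p.1.elim0, .of_isEmpty _, fun j ↦ j.elim0⟩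
  | succ k ih =>
    have := FiniteDimensional.of_finrank_pos (show 0 < finrank ℝ E by omega)
    obtain ⟨v, hv, hfv⟩ := exists_orthonormal_pair_map_eq (by omega) hf
    have finrank_span : finrank ℝ (Submodule.span ℝ (Set.range v)) = 2 :=
      finrank_span_eq_card hv.linearIndependent
    have finrank_add := (Submodule.span ℝ (Set.range v)).finrank_add_finrank_orthogonal
    obtain ⟨w, hw, hfw⟩ := ih (E := (Submodule.span ℝ (Set.range v))ᗮ) (by omega)
      (hf.comp continuous_subtype_val.continuousOn fun x hx ↦ by simpa using hx)
    exact ⟨_, orthonormal_finCons hv hw, Fin.cases hfv hfw⟩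

end OrthonormalPairs

lemma continuous_dirWidth {n : ℕ} {K : Set (EuclideanSpace ℝ (Fin n))} (hK : IsCompact K) :
    Continuous (dirWidth K) :=
  (hK.continuous_sSup (by fun_prop)).sub (hK.continuous_sInf (by fun_prop))

/-- Given `⌊n/2⌋ - 2` nonempty compact convex regions in `ℝⁿ` (`n ≥ 4`), there exist
pairwise orthogonal unit vectors `v₁, v₂, v₃, v₄` such that each region has equal
widths in directions `v₁, v₂` and in directions `v₃, v₄`. -/
theorem squares_inscribe_two (n : ℕ) (hn : 4 ≤ n)
    (K : Fin (n / 2 - 2) → Set (EuclideanSpace ℝ (Fin n)))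
    (hne : ∀ i, (K i).Nonempty) (hcpt : ∀ i, IsCompact (K i))
    (hconv : ∀ i, Convex ℝ (K i)) :
    ∃ v : Fin 4 → EuclideanSpace ℝ (Fin n),
      (∀ i, ‖v i‖ = 1) ∧
      (∀ i j : Fin 4, i ≠ j → ⟪v i, v j⟫ = 0) ∧
      ∀ i, dirWidth (K i) (v 0) = dirWidth (K i) (v 1) ∧
           dirWidth (K i) (v 2) = dirWidth (K i) (v 3) := by
  obtain ⟨v, hv, hK⟩ := squares_inscribe_two_general (k := 2) (f := fun x i ↦ dirWidth (K i) x)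
    (by rw [finrank_fin_fun, finrank_euclideanSpace_fin]; omega)
    (continuous_pi fun i ↦ continuous_dirWidth (hcpt i)).continuousOn
  have orthonormal_v := hv.comp finProdFinEquiv.symm finProdFinEquiv.symm.injective
  exact ⟨_, orthonormal_v.1, fun i j hij ↦ orthonormal_v.2 hij,
    fun i ↦ ⟨congrFun (hK 0) i, congrFun (hK 1) i⟩⟩
end
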